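/- arXiv:1302.0517 — 2 statements merged into one kernel-verified Lean document; each statement's English description precedes it below -/
import Mathlib

section
/- Let γ denote the Euler–Mascheroni constant and D = e^{1-γ/2}/√2. For every integer n > 16, every positive integer N, and every n-linear form U : (ℝ^N)^n → ℝ, one has (∑_{i₁,…,iₙ=1}^N |U(e_{i₁},…,e_{iₙ})|^{2n/(n+1)})^{(n+1)/(2n)} ≤ (4/D³) · (n-1)^{log₂ D} · ‖U‖. Consequently the optimal real multilinear Bohnenblust–Hille constant satisfies K_n ≤ (4/D³)(n-1)^{log₂ D} for all n > 16. -/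
open Real

/-- The Bohnenblust--Hille quantity of an `n`-linear form on `ℓ_∞^N` over `ℝ`:
`(∑_{i₁,…,iₙ} |U(e_{i₁},…,e_{iₙ})|^{2n/(n+1)})^{(n+1)/(2n)}`. -/
noncomputable def BHreal (n N : ℕ)
    (U : ContinuousMultilinearMap ℝ (fun _ : Fin n => (Fin N → ℝ)) ℝ) : ℝ :=
  (∑ i : Fin n → Fin N,
      |U (fun k => Pi.single (i k) (1 : ℝ))| ^ ((2 * n : ℝ) / (n + 1)))
    ^ ((n + 1 : ℝ) / (2 * n))

/-- The optimal real multilinear Bohnenblust--Hille constant. -/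
noncomputable def KrealOpt (n : ℕ) : ℝ :=
  sInf {C : ℝ | 1 ≤ C ∧ ∀ N : ℕ, 0 < N →
    ∀ U : ContinuousMultilinearMap ℝ (fun _ : Fin n => (Fin N → ℝ)) ℝ,
      BHreal n N U ≤ C * ‖U‖}


lemma bh_holder {κ ι : Type*} [Fintype κ] [Fintype ι] (w : κ → ℝ) (hw : ∀ k, 0 < w k)
    (hw1 : ∑ k, w k = 1) (f : κ → ι → ℝ) (hf : ∀ k i, 0 ≤ f k i) :
    ∑ i, ∏ k, f k i ^ w k ≤ ∏ k, (∑ i, f k i) ^ w k := by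
  by_cases h : ∃ k, ∑ i, f k i = 0
  · obtain ⟨k, hk⟩ := h
    have h0 : ∀ i, f k i = 0 := by
      intro i
      exact (Finset.sum_eq_zero_iff_of_nonneg (fun i _ => hf k i)).1 hk i (Finset.mem_univ i)
    have : ∑ i, ∏ k, f k i ^ w k = 0 := by
      apply Finset.sum_eq_zero
      intro i _
      apply Finset.prod_eq_zero (Finset.mem_univ k)
      rw [h0, Real.zero_rpow (hw k).ne']
    rw [this]
    exact Finset.prod_nonneg fun k _ => Real.rpow_nonneg (Finset.sum_nonneg fun i _ => hf k i) _
  · push Not at h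
    have hS : ∀ k, 0 < ∑ i, f k i := fun k =>
      lt_of_le_of_ne (Finset.sum_nonneg fun i _ => hf k i) (h k).symm
    have hP : 0 < ∏ k, (∑ i, f k i) ^ w k :=
      Finset.prod_pos fun k _ => Real.rpow_pos_of_pos (hS k) _
    have h1 : ∀ i, ∏ k, f k i ^ w k ≤
        (∏ k, (∑ i, f k i) ^ w k) * ∑ k, w k * (f k i / ∑ i, f k i) := by
      intro i
      have := Real.geom_mean_le_arith_mean_weighted Finset.univ w
        (fun k => f k i / ∑ i, f k i) (fun k _ => (hw k).le) hw1
        (fun k _ => div_nonneg (hf k i) (hS k).le)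
      calc ∏ k, f k i ^ w k = (∏ k, (∑ i, f k i) ^ w k) * ∏ k, (f k i / ∑ i, f k i) ^ w k := by
            rw [← Finset.prod_mul_distrib]
            apply Finset.prod_congr rfl
            intro k _
            rw [← Real.mul_rpow (hS k).le (div_nonneg (hf k i) (hS k).le),
              mul_div_cancel₀ _ (hS k).ne']
        _ ≤ _ := mul_le_mul_of_nonneg_left this hP.le
    calc ∑ i, ∏ k, f k i ^ w k
        ≤ ∑ i, (∏ k, (∑ i, f k i) ^ w k) * ∑ k, w k * (f k i / ∑ i, f k i) :=
          Finset.sum_le_sum fun i _ => h1 i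
      _ = (∏ k, (∑ i, f k i) ^ w k) * 1 := by
          rw [← Finset.mul_sum, Finset.sum_comm]
          congr 1
          rw [← hw1]
          apply Finset.sum_congr rfl
          intro k _
          rw [← Finset.mul_sum, ← Finset.sum_div, div_self (hS k).ne', mul_one]
      _ = _ := mul_one _

lemma bh_sum_insert {α : Type*} [Fintype α] {n : ℕ} (j : Fin (n + 1))
    (F : (Fin (n + 1) → α) → ℝ) :
    ∑ i, F i = ∑ y : Fin n → α, ∑ x : α, F (j.insertNth x y) := by
  rw [← (Fin.insertNthEquiv (fun _ => α) j).sum_comp F, Fintype.sum_prod_type,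
    Finset.sum_comm]
  rfl

lemma bh_sum_cons {α : Type*} [Fintype α] {n : ℕ}
    (F : (Fin (n + 1) → α) → ℝ) :
    ∑ i, F i = ∑ x : α, ∑ y : Fin n → α, F (Fin.cons x y) := by
  rw [← (Fin.consEquiv (fun _ => α)).sum_comp F, Fintype.sum_prod_type]
  rfl

lemma bh_LW {α : Type*} [Fintype α] (n : ℕ) (g : Fin (n + 2) → (Fin (n + 1) → α) → ℝ)
    (hg : ∀ j y, 0 ≤ g j y) :
    ∑ i : Fin (n + 2) → α, ∏ j, g j (j.removeNth i) ≤
      ∏ j, (∑ y, g j y ^ ((n : ℝ) + 1)) ^ (1 / ((n : ℝ) + 1)) := by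
  induction n with
  | zero =>
    rw [bh_sum_cons]
    simp only [Nat.cast_zero, zero_add, Real.rpow_one, div_one]
    apply le_of_eq
    have h1 : ∀ (x : α) (y : Fin 1 → α),
        (Fin.removeNth (1 : Fin 2) (Fin.cons x y : Fin 2 → α) : Fin 1 → α) = fun _ => x := by
      intro x y
      funext k
      fin_cases k
      rfl
    have h2 : ∀ (x : α) (y : Fin 1 → α),
        (Fin.removeNth (0 : Fin 2) (Fin.cons x y : Fin 2 → α) : Fin 1 → α) = y := by
      intro x y
      funext k
      fin_cases k
      rfl
    have h3 : ∑ y : Fin 1 → α, g 1 y = ∑ x : α, g 1 (fun _ => x) := by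
      rw [← (Equiv.funUnique (Fin 1) α).symm.sum_comp]
      rfl
    have h4 : ∀ (x : α) (y : Fin 1 → α),
        ∏ j : Fin 2, g j (j.removeNth (Fin.cons x y : Fin 2 → α)) = g 0 y * g 1 (fun _ => x) := by
      intro x y
      rw [Fin.prod_univ_two]
      congr 1
      exact congrArg (g 1) (h1 x y)
    refine (Finset.sum_congr rfl fun x _ => Finset.sum_congr rfl fun y _ => h4 x y).trans ?_
    refine Eq.trans ?_ (Fin.prod_univ_two (fun j : Fin 2 => ∑ y, g j y)).symm
    erw [h3]
    rw [Finset.sum_comm, Finset.sum_mul_sum]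
  | succ n ih =>
    have hn1 : (0:ℝ) < (n:ℝ) + 1 := by positivity
    have hn2 : (0:ℝ) < (n:ℝ) + 2 := by positivity
    rw [bh_sum_cons]
    have e : ((n + 1 : ℕ) : ℝ) + 1 = (n:ℝ) + 2 := by push_cast; ring
    rw [e]
    have hr0 : ∀ (x : α) (y : Fin (n+2) → α),
        (Fin.removeNth (0 : Fin (n+3)) (Fin.cons x y : Fin (n+3) → α) : Fin (n+2) → α) = y := by
      intro x y
      rw [Fin.removeNth_zero]
      rfl
    have hrs : ∀ (x : α) (y : Fin (n+2) → α) (j : Fin (n+2)),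
        (Fin.removeNth j.succ (Fin.cons x y : Fin (n+3) → α) : Fin (n+2) → α) =
          Fin.cons x (j.removeNth y) := by
      intro x y j
      funext k
      refine Fin.cases ?_ (fun k => ?_) k
      · rfl
      · simp [Fin.removeNth]
    set A : ℝ := (∑ y, g 0 y ^ ((n:ℝ) + 2)) ^ (1 / ((n:ℝ) + 2)) with hA
    have hA0 : 0 ≤ A := Real.rpow_nonneg
      (Finset.sum_nonneg fun y _ => Real.rpow_nonneg (hg _ _) _) _
    have step : ∀ x : α, ∑ y : Fin (n+2) → α, ∏ j, g j (j.removeNth (Fin.cons x y : Fin (n+3) → α))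
        ≤ A * ∏ j : Fin (n+2), (∑ z : Fin (n+1) → α, g j.succ (Fin.cons x z) ^ ((n:ℝ) + 2))
            ^ (1 / ((n:ℝ) + 2)) := by
      intro x
      let h : Fin (n+2) → (Fin (n+1) → α) → ℝ := fun j z =>
        g j.succ (Fin.cons x z) ^ (((n:ℝ) + 2) / ((n:ℝ) + 1))
      have hh : ∀ j z, 0 ≤ h j z := fun j z => Real.rpow_nonneg (hg _ _) _
      have ihh := ih h hh
      have hold := bh_holder (κ := Bool) (ι := Fin (n+2) → α)
        (fun b => if b then 1 / ((n:ℝ) + 2) else ((n:ℝ) + 1) / ((n:ℝ) + 2))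
        (by intro b; cases b <;> simp <;> positivity)
        (by simp; field_simp; ring)
        (fun b y => if b then g 0 y ^ ((n:ℝ) + 2) else ∏ j, h j (j.removeNth y))
        (by
          intro b y
          cases b
          · simpa using Finset.prod_nonneg fun j _ => hh j _
          · simpa using Real.rpow_nonneg (hg _ _) _)
      simp only [Fintype.prod_bool, if_true, Bool.false_eq_true, if_false] at hold
      have h1 : ∀ y : Fin (n+2) → α,
          (g 0 y ^ ((n:ℝ) + 2)) ^ (1 / ((n:ℝ) + 2)) *
            (∏ j, h j (j.removeNth y)) ^ (((n:ℝ) + 1) / ((n:ℝ) + 2)) =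
          ∏ j, g j (j.removeNth (Fin.cons x y : Fin (n+3) → α)) := by
        intro y
        rw [Fin.prod_univ_succ (fun j => g j (j.removeNth (Fin.cons x y : Fin (n+3) → α))), hr0]
        congr 1
        · rw [← Real.rpow_mul (hg _ _), mul_one_div_cancel hn2.ne', Real.rpow_one]
        · rw [← Real.finsetProd_rpow _ _ (fun j _ => hh j _)]
          apply Finset.prod_congr rfl
          intro j _
          rw [hrs]
          simp only [h]
          rw [← Real.rpow_mul (hg _ _)]
          have : ((n:ℝ) + 2) / ((n:ℝ) + 1) * (((n:ℝ) + 1) / ((n:ℝ) + 2)) = 1 := by field_simp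
          rw [this, Real.rpow_one]
      simp only [h1] at hold
      refine hold.trans ?_
      apply mul_le_mul_of_nonneg_left _ hA0
      calc _ ≤ (∏ j, (∑ y, h j y ^ ((n : ℝ) + 1)) ^ (1 / ((n : ℝ) + 1))) ^
              (((n:ℝ) + 1) / ((n:ℝ) + 2)) := by
            apply Real.rpow_le_rpow _ ihh (by positivity)
            exact Finset.sum_nonneg fun y _ => Finset.prod_nonneg fun j _ => hh j _
        _ = _ := by
            rw [← Real.finsetProd_rpow _ _ (fun j _ => Real.rpow_nonneg
              (Finset.sum_nonneg fun y _ => Real.rpow_nonneg (hh j _) _) _)]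
            apply Finset.prod_congr rfl
            intro j _
            rw [← Real.rpow_mul (Finset.sum_nonneg fun y _ => Real.rpow_nonneg (hh j _) _)]
            congr 1
            · apply Finset.sum_congr rfl
              intro y _
              simp only [h]
              rw [← Real.rpow_mul (hg _ _)]
              congr 1
              field_simp
            · field_simp
    calc _ ≤ ∑ x : α, A * ∏ j : Fin (n+2), (∑ z : Fin (n+1) → α, g j.succ (Fin.cons x z) ^ ((n:ℝ) + 2))
            ^ (1 / ((n:ℝ) + 2)) := Finset.sum_le_sum fun x _ => step x
      _ = A * ∑ x : α, ∏ j : Fin (n+2), (∑ z : Fin (n+1) → α, g j.succ (Fin.cons x z) ^ ((n:ℝ) + 2))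
            ^ (1 / ((n:ℝ) + 2)) := by rw [Finset.mul_sum]
      _ ≤ A * ∏ j : Fin (n+2), (∑ x : α, ∑ z : Fin (n+1) → α, g j.succ (Fin.cons x z) ^ ((n:ℝ) + 2))
            ^ (1 / ((n:ℝ) + 2)) := by
          apply mul_le_mul_of_nonneg_left _ hA0
          apply bh_holder (fun _ : Fin (n+2) => 1 / ((n:ℝ) + 2)) (fun _ => by positivity)
          · simp
            field_simp
          · intro j x
            exact Finset.sum_nonneg fun y _ => Real.rpow_nonneg (hg _ _) _
      _ = _ := by
          rw [Fin.prod_univ_succ (fun j : Fin (n+3) => (∑ y, g j y ^ ((n:ℝ) + 2)) ^ (1 / ((n:ℝ) + 2)))]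
          congr 1
          apply Finset.prod_congr rfl
          intro j _
          rw [bh_sum_cons (fun y => g j.succ y ^ ((n:ℝ) + 2))]

lemma bh_blei {α : Type*} [Fintype α] (n : ℕ) (a : (Fin (n + 2) → α) → ℝ)
    (ha : ∀ i, 0 ≤ a i) :
    ∑ i, a i ^ (2 * ((n:ℝ) + 2) / ((n:ℝ) + 3)) ≤
      ∏ j : Fin (n+2), (∑ y : Fin (n+1) → α, (∑ x, a (j.insertNth x y) ^ 2) ^ (((n:ℝ) + 1) / ((n:ℝ) + 2)))
        ^ (((n:ℝ) + 2) / (((n:ℝ) + 3) * ((n:ℝ) + 1))) := by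
  have hn1 : (0:ℝ) < (n:ℝ) + 1 := by positivity
  have hn2 : (0:ℝ) < (n:ℝ) + 2 := by positivity
  have hn3 : (0:ℝ) < (n:ℝ) + 3 := by positivity
  set s : Fin (n+2) → (Fin (n+1) → α) → ℝ := fun j y => ∑ x, a (j.insertNth x y) ^ 2 with hs
  have hs0 : ∀ j y, 0 ≤ s j y := fun j y => Finset.sum_nonneg fun x _ => sq_nonneg _
  set B : Fin (n+2) → ℝ := fun j => ∑ y, s j y ^ (((n:ℝ) + 1) / ((n:ℝ) + 2)) with hB
  have hB0 : ∀ j, 0 ≤ B j := fun j => Finset.sum_nonneg fun y _ => Real.rpow_nonneg (hs0 _ _) _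
  have hsa : ∀ j i, a i ^ 2 ≤ s j (j.removeNth i) := by
    intro j i
    have : a i ^ 2 = a (j.insertNth (i j) (j.removeNth i)) ^ 2 := by simp
    rw [this]
    exact Finset.single_le_sum (f := fun x => a (j.insertNth x (j.removeNth i)) ^ 2)
      (fun x _ => sq_nonneg _) (Finset.mem_univ (i j))
  have hold := bh_holder (κ := Option (Fin (n+2))) (ι := Fin (n+2) → α)
    (fun _ => 1 / ((n:ℝ) + 3)) (fun _ => by positivity) (by simp; field_simp; ring)
    (fun o i => match o with
      | none => ∏ j, s j (j.removeNth i) ^ (1 / ((n:ℝ) + 2))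
      | some j => a i ^ 2 * s j (j.removeNth i) ^ (-(1 / ((n:ℝ) + 2))))
    (by
      intro o i
      cases o with
      | none => exact Finset.prod_nonneg fun j _ => Real.rpow_nonneg (hs0 _ _) _
      | some j => exact mul_nonneg (sq_nonneg _) (Real.rpow_nonneg (hs0 _ _) _))
  simp only [Fintype.prod_option] at hold
  have hL : ∀ i, a i ^ (2 * ((n:ℝ) + 2) / ((n:ℝ) + 3)) =
      (∏ j, s j (j.removeNth i) ^ (1 / ((n:ℝ) + 2))) ^ (1 / ((n:ℝ) + 3)) *
      ∏ j, (a i ^ 2 * s j (j.removeNth i) ^ (-(1 / ((n:ℝ) + 2)))) ^ (1 / ((n:ℝ) + 3)) := by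
    intro i
    rcases (ha i).eq_or_lt with h0 | h0
    · rw [← h0, Real.zero_rpow (by positivity)]
      symm
      apply mul_eq_zero_of_right
      apply Finset.prod_eq_zero (Finset.mem_univ 0)
      simp
      rw [Real.zero_rpow (by positivity)]
    · have hsp : ∀ j, 0 < s j (j.removeNth i) := fun j =>
        lt_of_lt_of_le (by positivity) (hsa j i)
      rw [← Real.finsetProd_rpow _ _ (fun j _ => Real.rpow_nonneg (hs0 _ _) _),
        ← Finset.prod_mul_distrib]
      have : ∀ j ∈ (Finset.univ : Finset (Fin (n+2))), (s j (j.removeNth i) ^ (1 / ((n:ℝ) + 2))) ^ (1 / ((n:ℝ) + 3)) *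
          (a i ^ 2 * s j (j.removeNth i) ^ (-(1 / ((n:ℝ) + 2)))) ^ (1 / ((n:ℝ) + 3)) =
          a i ^ (2 / ((n:ℝ) + 3)) := by
        intro j _
        rw [← Real.mul_rpow (Real.rpow_nonneg (hs0 _ _) _)
          (mul_nonneg (sq_nonneg _) (Real.rpow_nonneg (hs0 _ _) _)), mul_left_comm,
          ← Real.rpow_add (hsp j), add_neg_cancel, Real.rpow_zero, mul_one,
          ← Real.rpow_natCast, ← Real.rpow_mul (ha i)]
        congr 1
        push_cast
        ring
      rw [Finset.prod_congr rfl this]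
      simp only [Finset.prod_const, Finset.card_univ, Fintype.card_fin]
      rw [← Real.rpow_natCast, ← Real.rpow_mul (ha i)]
      congr 1
      push_cast
      ring
  rw [Finset.sum_congr rfl fun i _ => hL i]
  refine hold.trans ?_
  have hsome : ∀ j : Fin (n+2), ∑ i, a i ^ 2 * s j (j.removeNth i) ^ (-(1 / ((n:ℝ) + 2))) = B j := by
    intro j
    rw [bh_sum_insert j]
    apply Finset.sum_congr rfl
    intro y _
    simp only [Fin.removeNth_insertNth]
    rw [← Finset.sum_mul]
    change s j y * _ = _
    rcases (hs0 j y).eq_or_lt with h0 | h0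
    · rw [← h0, zero_mul, Real.zero_rpow (by positivity)]
    · nth_rewrite 1 [← Real.rpow_one (s j y)]
      rw [← Real.rpow_add h0]
      congr 1
      field_simp
      ring
  have hnone : ∑ i : Fin (n+2) → α, ∏ j, s j (j.removeNth i) ^ (1 / ((n:ℝ) + 2)) ≤
      ∏ j, B j ^ (1 / ((n:ℝ) + 1)) := by
    refine (bh_LW n (fun j y => s j y ^ (1 / ((n:ℝ) + 2)))
      (fun j y => Real.rpow_nonneg (hs0 _ _) _)).trans (le_of_eq ?_)
    apply Finset.prod_congr rfl
    intro j _
    congr 1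
    apply Finset.sum_congr rfl
    intro y _
    rw [← Real.rpow_mul (hs0 _ _)]
    congr 1
    ring
  simp only [hsome]
  calc _ ≤ (∏ j, B j ^ (1 / ((n:ℝ) + 1))) ^ (1 / ((n:ℝ) + 3)) * ∏ j, B j ^ (1 / ((n:ℝ) + 3)) := by
        apply mul_le_mul_of_nonneg_right
        · apply Real.rpow_le_rpow _ hnone (by positivity)
          exact Finset.sum_nonneg fun i _ => Finset.prod_nonneg fun j _ => Real.rpow_nonneg (hs0 _ _) _
        · exact Finset.prod_nonneg fun j _ => Real.rpow_nonneg (hB0 _) _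
    _ = _ := by
        rw [← Real.finsetProd_rpow _ _ (fun j _ => Real.rpow_nonneg (hB0 _) _),
          ← Finset.prod_mul_distrib]
        apply Finset.prod_congr rfl
        intro j _
        rw [← Real.rpow_mul (hB0 _), ← Real.rpow_add_of_nonneg (hB0 _) (by positivity) (by positivity)]
        congr 1
        field_simp
        ring

noncomputable def bhSg (b : Bool) : ℝ := if b then 1 else -1

noncomputable def bhF {N : ℕ} (a : Fin N → ℝ) (s : Fin N → Bool) : ℝ := ∑ x, bhSg (s x) * a x

lemma bh_sum_cons' {α : Type*} [Fintype α] {n : ℕ}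
    (F : (Fin (n + 1) → α) → ℝ) :
    ∑ i, F i = ∑ x : α, ∑ y : Fin n → α, F (Fin.cons x y) := by
  rw [← (Fin.consEquiv (fun _ => α)).sum_comp F, Fintype.sum_prod_type]
  rfl

lemma bh_sumF {N : ℕ} (a : Fin (N+1) → ℝ) (φ : ℝ → ℝ) :
    ∑ s, φ (bhF a s) = ∑ s, (φ (a 0 + bhF (fun x => a x.succ) s)
      + φ (-a 0 + bhF (fun x => a x.succ) s)) := by
  rw [bh_sum_cons' (fun s => φ (bhF a s))]
  simp only [Fintype.sum_bool, ← Finset.sum_add_distrib]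
  apply Finset.sum_congr rfl
  intro s _
  simp [bhF, Fin.sum_univ_succ, bhSg]

lemma bh_moments {N : ℕ} (a : Fin N → ℝ) :
    (∑ s, (bhF a s)^2 = 2^N * ∑ x, a x^2) ∧
    (∑ s, (bhF a s)^4 = 2^N * (3 * (∑ x, a x^2)^2 - 2 * ∑ x, a x^4)) ∧
    (∑ s, (bhF a s)^6 = 2^N * (15 * (∑ x, a x^2)^3 - 30 * (∑ x, a x^2) * (∑ x, a x^4)
      + 16 * ∑ x, a x^6)) ∧
    (∑ s, (bhF a s)^8 = 2^N * (105 * (∑ x, a x^2)^4 - 420 * (∑ x, a x^2)^2 * (∑ x, a x^4)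
      + 448 * (∑ x, a x^2) * (∑ x, a x^6) + 140 * (∑ x, a x^4)^2 - 272 * ∑ x, a x^8)) := by
  induction N with
  | zero => simp [bhF]
  | succ N ih =>
    obtain ⟨h2, h4, h6, h8⟩ := ih (fun x => a x.succ)
    have h0 : ∑ s : Fin N → Bool, (1:ℝ) = 2^N := by simp
    simp only [Fin.sum_univ_succ (n := N)]
    set S2 := ∑ x : Fin N, a x.succ^2
    set S4 := ∑ x : Fin N, a x.succ^4
    set S6 := ∑ x : Fin N, a x.succ^6
    set S8 := ∑ x : Fin N, a x.succ^8
    set b := fun x : Fin N => a x.succ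
    refine ⟨?_, ?_, ?_, ?_⟩
    · rw [bh_sumF a (fun t => t^2)]
      have : ∀ s, (a 0 + bhF b s)^2 + (-a 0 + bhF b s)^2 = 2 * bhF b s^2 + 2 * a 0^2 * 1 := by
        intro s; ring
      refine (Finset.sum_congr rfl fun s _ => this s).trans ?_
      simp only [Finset.sum_add_distrib, ← Finset.mul_sum, h2, h0]
      ring
    · rw [bh_sumF a (fun t => t^4)]
      have : ∀ s, (a 0 + bhF b s)^4 + (-a 0 + bhF b s)^4 = 2 * bhF b s^4
          + 12 * a 0^2 * bhF b s^2 + 2 * a 0^4 * 1 := by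
        intro s; ring
      refine (Finset.sum_congr rfl fun s _ => this s).trans ?_
      simp only [Finset.sum_add_distrib, ← Finset.mul_sum, h2, h4, h0]
      ring
    · rw [bh_sumF a (fun t => t^6)]
      have : ∀ s, (a 0 + bhF b s)^6 + (-a 0 + bhF b s)^6 = 2 * bhF b s^6
          + 30 * a 0^2 * bhF b s^4 + 30 * a 0^4 * bhF b s^2 + 2 * a 0^6 * 1 := by
        intro s; ring
      refine (Finset.sum_congr rfl fun s _ => this s).trans ?_
      simp only [Finset.sum_add_distrib, ← Finset.mul_sum, h2, h4, h6, h0]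
      ring
    · rw [bh_sumF a (fun t => t^8)]
      have : ∀ s, (a 0 + bhF b s)^8 + (-a 0 + bhF b s)^8 = 2 * bhF b s^8
          + 56 * a 0^2 * bhF b s^6 + 140 * a 0^4 * bhF b s^4 + 56 * a 0^6 * bhF b s^2
          + 2 * a 0^8 * 1 := by
        intro s; ring
      refine (Finset.sum_congr rfl fun s _ => this s).trans ?_
      simp only [Finset.sum_add_distrib, ← Finset.mul_sum, h2, h4, h6, h8, h0]
      ring

/-- polynomial majorant of log -/
lemma bh_log_le (x : ℝ) (hx : 0 < x) :
    Real.log x ≤ -(3/5) + (x^3/3 - 15/2 * x^2 + 66 * x) / 80 := by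
  let φ : ℝ → ℝ := fun x => -(3/5) + (x^3/3 - 15/2 * x^2 + 66 * x) / 80 - Real.log x
  have hd : ∀ x : ℝ, 0 < x → HasDerivAt φ ((x - 2) * (x - 5) * (x - 8) / (80 * x)) x := by
    intro x hx
    have h3 := (hasDerivAt_pow 3 x).div_const 3
    have h2 := (hasDerivAt_pow 2 x).const_mul (15/2 : ℝ)
    have h1 := (hasDerivAt_id x).const_mul (66 : ℝ)
    have := ((((h3.sub h2).add h1).div_const 80).const_add (-(3/5))).sub (Real.hasDerivAt_log hx.ne')
    refine this.congr_deriv ?_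
    field_simp
    push_cast
    ring
  have hc : ∀ s : Set ℝ, (∀ y ∈ s, 0 < y) → ContinuousOn φ s := fun s hs y hy =>
    (hd y (hs y hy)).continuousAt.continuousWithinAt
  have hl := Real.log_two_lt_d9
  have φ2 : 0 ≤ φ 2 := by
    simp only [φ]; norm_num; linarith
  have φ8 : 0 ≤ φ 8 := by
    have : Real.log 8 = 3 * Real.log 2 := by
      rw [show (8:ℝ) = 2^3 by norm_num, Real.log_pow]; norm_num
    simp only [φ]; rw [this]; norm_num; linarith
  have key : 0 ≤ φ x := by
    rcases le_total x 2 with h | h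
    · have : AntitoneOn φ (Set.Ioc 0 2) := by
        apply antitoneOn_of_deriv_nonpos (convex_Ioc 0 2) (hc _ fun y hy => hy.1)
        · intro y hy
          rw [interior_Ioc] at hy
          exact (hd y hy.1).differentiableAt.differentiableWithinAt
        · intro y hy
          rw [interior_Ioc] at hy
          rw [(hd y hy.1).deriv]
          apply div_nonpos_of_nonpos_of_nonneg
          · have : 0 ≤ (2 - y) * (5 - y) * (8 - y) :=
              mul_nonneg (mul_nonneg (by linarith [hy.2]) (by linarith [hy.2])) (by linarith [hy.2])
            nlinarith
          · linarith [hy.1]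
      exact φ2.trans (this ⟨hx, h⟩ ⟨by norm_num, le_rfl⟩ h)
    rcases le_total x 5 with h5 | h5
    · have : MonotoneOn φ (Set.Icc 2 5) := by
        apply monotoneOn_of_deriv_nonneg (convex_Icc 2 5) (hc _ fun y hy => by linarith [hy.1])
        · intro y hy
          rw [interior_Icc] at hy
          exact (hd y (by linarith [hy.1])).differentiableAt.differentiableWithinAt
        · intro y hy
          rw [interior_Icc] at hy
          rw [(hd y (by linarith [hy.1])).deriv]
          apply div_nonneg
          · have : 0 ≤ (y - 2) * (5 - y) * (8 - y) :=
              mul_nonneg (mul_nonneg (by linarith [hy.1]) (by linarith [hy.2])) (by linarith [hy.2])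
            nlinarith
          · linarith [hy.1]
      exact φ2.trans (this ⟨le_rfl, by norm_num⟩ ⟨h, h5⟩ h)
    rcases le_total x 8 with h8 | h8
    · have : AntitoneOn φ (Set.Icc 5 8) := by
        apply antitoneOn_of_deriv_nonpos (convex_Icc 5 8) (hc _ fun y hy => by linarith [hy.1])
        · intro y hy
          rw [interior_Icc] at hy
          exact (hd y (by linarith [hy.1])).differentiableAt.differentiableWithinAt
        · intro y hy
          rw [interior_Icc] at hy
          rw [(hd y (by linarith [hy.1])).deriv]
          apply div_nonpos_of_nonpos_of_nonneg
          · have : 0 ≤ (y - 2) * (y - 5) * (8 - y) :=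
              mul_nonneg (mul_nonneg (by linarith [hy.1]) (by linarith [hy.1])) (by linarith [hy.2])
            nlinarith
          · linarith [hy.1]
      exact φ8.trans (this ⟨h5, h8⟩ ⟨by norm_num, le_rfl⟩ h8)
    · have : MonotoneOn φ (Set.Ici 8) := by
        apply monotoneOn_of_deriv_nonneg (convex_Ici 8) (hc _ fun y hy => by linarith [Set.mem_Ici.1 hy])
        · intro y hy
          rw [interior_Ici] at hy
          exact (hd y (by linarith [Set.mem_Ioi.1 hy])).differentiableAt.differentiableWithinAt
        · intro y hy
          rw [interior_Ici] at hy
          have hy := Set.mem_Ioi.1 hy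
          rw [(hd y (by linarith)).deriv]
          apply div_nonneg
          · exact mul_nonneg (mul_nonneg (by linarith) (by linarith)) (by linarith)
          · linarith
      exact φ8.trans (this (Set.mem_Ici.2 le_rfl) h8 h8)
  simp only [φ] at key
  linarith

noncomputable def bhQ (t : ℝ) : ℝ := -(3/5) * t^2 + (t^8/3 - 15/2 * t^6 + 66 * t^4) / 80

lemma bh_pointwise (t δ : ℝ) (hδ : 0 ≤ δ) (hδ2 : δ < 2) :
    Real.exp (-(δ/2)) * (t^2 - δ/2 * (bhQ t - t^2)) ≤ |t| ^ (2 - δ) := by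
  by_cases ht : t = 0
  · subst ht
    simp [bhQ]
    positivity
  have htp : 0 < |t| := abs_pos.2 ht
  have hl := bh_log_le (t^2) (by positivity)
  have hl2 : Real.log (t^2) = 2 * Real.log |t| := by
    rw [← sq_abs, Real.log_pow]; norm_num
  rw [hl2] at hl
  have e1 : |t| ^ (2 - δ) = t^2 * (Real.exp (-(δ/2)) * Real.exp (-(δ * (Real.log |t| - 1/2)))) := by
    rw [← Real.exp_add, Real.rpow_sub htp, Real.rpow_two, sq_abs, Real.rpow_def_of_pos htp,
      div_eq_mul_inv, ← Real.exp_neg]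
    congr 2
    ring
  have e2 : 1 - δ * (Real.log |t| - 1/2) ≤ Real.exp (-(δ * (Real.log |t| - 1/2))) := by
    have := Real.add_one_le_exp (-(δ * (Real.log |t| - 1/2)))
    linarith
  rw [e1, mul_left_comm]
  apply mul_le_mul_of_nonneg_left _ (Real.exp_pos _).le
  refine le_trans ?_ (mul_le_mul_of_nonneg_left e2 (sq_nonneg t))
  have h3 : t^2 * (2 * Real.log |t|) ≤ bhQ t := by
    refine (mul_le_mul_of_nonneg_left hl (sq_nonneg t)).trans (le_of_eq ?_)
    unfold bhQ; ring
  have h4 := mul_le_mul_of_nonneg_left h3 hδ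
  linarith

lemma bh_Q_le {N : ℕ} (a : Fin N → ℝ) (ha : ∑ x, a x^2 = 1) :
    ∑ s, bhQ (bhF a s) ≤ 2^N := by
  obtain ⟨h2, h4, h6, h8⟩ := bh_moments a
  have e : ∑ s, bhQ (bhF a s) = -(3/5) * ∑ s, bhF a s^2 + ((∑ s, bhF a s^8)/3
      - 15/2 * ∑ s, bhF a s^6 + 66 * ∑ s, bhF a s^4) / 80 := by
    simp only [bhQ, Finset.sum_add_distrib, ← Finset.mul_sum, ← Finset.sum_div, Finset.sum_sub_distrib]
  rw [e, h2, h4, h6, h8, ha]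
  have hpt : ∑ x, (88/3 : ℝ) * a x^6 ≤ ∑ x, (12/5 * a x^4 + 272/3 * a x^8) := by
    apply Finset.sum_le_sum
    intro x _
    have : 0 ≤ (a x^4) * (12/5 + 272/3 * (a x^2)^2 - 88/3 * a x^2) := by
      apply mul_nonneg (by positivity)
      nlinarith [sq_nonneg (a x^2 - 11/68)]
    linarith [this, show (a x^4) * (12/5 + 272/3 * (a x^2)^2 - 88/3 * a x^2) =
      12/5 * a x^4 + 272/3 * a x^8 - 88/3 * a x^6 by ring]
  rw [Finset.sum_add_distrib, ← Finset.mul_sum, ← Finset.mul_sum, ← Finset.mul_sum] at hpt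
  have h41 : ∑ x, a x^4 ≤ 1 := by
    rw [← ha]
    apply Finset.sum_le_sum
    intro x _
    have h1 : a x^2 ≤ 1 := by
      rw [← ha]
      exact Finset.single_le_sum (f := fun x => a x^2) (fun x _ => sq_nonneg _) (Finset.mem_univ x)
    nlinarith [sq_nonneg (a x)]
  have h40 : 0 ≤ ∑ x, a x^4 := Finset.sum_nonneg fun x _ => by positivity
  set S4 := ∑ x, a x^4
  set S6 := ∑ x, a x^6
  set S8 := ∑ x, a x^8
  have h2N : (0:ℝ) < 2^N := by positivity
  have : (-(3/5) * 1 + ((105 * 1^4 - 420 * 1^2 * S4 + 448 * 1 * S6 + 140 * S4^2 - 272 * S8)/3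
      - 15/2 * (15 * 1^3 - 30 * 1 * S4 + 16 * S6) + 66 * (3 * 1^2 - 2 * S4)) / 80) ≤ 1 := by
    nlinarith
  nlinarith

lemma bh_khin_one {N : ℕ} (a : Fin N → ℝ) (ha : ∑ x, a x^2 = 1) (δ : ℝ) (hδ : 0 ≤ δ)
    (hδ2 : δ < 2) : 2^N * Real.exp (-(δ/2)) ≤ ∑ s, |bhF a s| ^ (2 - δ) := by
  have h1 : ∑ s, Real.exp (-(δ/2)) * (bhF a s^2 - δ/2 * (bhQ (bhF a s) - bhF a s^2)) ≤
      ∑ s, |bhF a s| ^ (2 - δ) :=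
    Finset.sum_le_sum fun s _ => bh_pointwise _ δ hδ hδ2
  refine le_trans ?_ h1
  rw [← Finset.mul_sum, Finset.sum_sub_distrib, ← Finset.mul_sum, Finset.sum_sub_distrib,
    (bh_moments a).1, ha, mul_comm]
  apply mul_le_mul_of_nonneg_left _ (Real.exp_pos _).le
  have := bh_Q_le a ha
  nlinarith

lemma bh_khin {N : ℕ} (a : Fin N → ℝ) (δ : ℝ) (hδ : 0 ≤ δ)
    (hδ2 : δ < 2) : 2^N * (∑ x, a x^2) ^ (1 - δ/2) ≤
      Real.exp (δ/2) * ∑ s, |bhF a s| ^ (2 - δ) := by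
  have hS0 : 0 ≤ ∑ x, a x^2 := Finset.sum_nonneg fun x _ => sq_nonneg _
  rcases hS0.eq_or_lt with h0 | h0
  · rw [← h0, Real.zero_rpow (by linarith), mul_zero]
    exact mul_nonneg (Real.exp_pos _).le (Finset.sum_nonneg fun s _ => Real.rpow_nonneg (abs_nonneg _) _)
  set S := ∑ x, a x^2 with hS
  have hr : 0 < √S := Real.sqrt_pos.2 h0
  have h1 := bh_khin_one (fun x => a x / √S) (by
    simp only [div_pow, Real.sq_sqrt hS0, ← Finset.sum_div]
    exact div_self h0.ne') δ hδ hδ2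
  have h2 : ∀ s, |bhF (fun x => a x / √S) s| ^ (2 - δ) = |bhF a s| ^ (2 - δ) / S ^ (1 - δ/2) := by
    intro s
    have : bhF (fun x => a x / √S) s = bhF a s / √S := by
      simp only [bhF, Finset.sum_div, mul_div_assoc]
    rw [this, abs_div, abs_of_pos hr, Real.div_rpow (abs_nonneg _) hr.le, Real.sqrt_eq_rpow,
      ← Real.rpow_mul hS0]
    congr 2
    ring
  simp only [h2, ← Finset.sum_div] at h1
  rw [le_div_iff₀ (Real.rpow_pos_of_pos h0 _)] at h1
  have h3 := mul_le_mul_of_nonneg_left h1 (Real.exp_pos (δ/2)).le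
  refine le_trans (le_of_eq ?_) h3
  rw [show Real.exp (δ/2) * (2^N * Real.exp (-(δ/2)) * S ^ (1 - δ/2)) =
    (Real.exp (δ/2) * Real.exp (-(δ/2))) * (2^N * S ^ (1 - δ/2)) by ring, ← Real.exp_add]
  simp

lemma bh_main (N n : ℕ) (a : (Fin (n+1) → Fin N) → ℝ) (M : ℝ)
    (H : ∀ z : Fin (n+1) → Fin N → ℝ, (∀ k x, |z k x| ≤ 1) →
      |∑ i, a i * ∏ k, z k (i k)| ≤ M) :
    ∑ i, |a i| ^ (2 * ((n:ℝ)+1) / ((n:ℝ)+2)) ≤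
      (Real.exp ((harmonic n : ℝ) / 2) * M) ^ (2 * ((n:ℝ)+1) / ((n:ℝ)+2)) := by
  induction n generalizing M with
  | zero =>
    have e : (2 * (((0:ℕ):ℝ)+1) / (((0:ℕ):ℝ)+2)) = 1 := by norm_num
    rw [e]
    simp only [Real.rpow_one, harmonic_zero]
    have h := H (fun _ x => SignType.sign (a fun _ => x)) (by
      intro k x
      rcases lt_trichotomy (a fun _ => x) 0 with h | h | h
      · simp [h]
      · simp [h]
      · simp [h])
    have h2 : ∀ i : Fin 1 → Fin N, a i * ∏ k, ((SignType.sign (a fun _ => i k) : SignType) : ℝ) = |a i| := by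
      intro i
      have hi : (fun _ => i 0) = i := by
        funext k; congr 1; exact Subsingleton.elim _ _
      rw [Fin.prod_univ_one, hi, self_mul_sign]
    have h3 : ∑ i : Fin 1 → Fin N, a i * ∏ k, ((SignType.sign (a fun _ => i k) : SignType) : ℝ) = ∑ i, |a i| :=
      Finset.sum_congr rfl fun i _ => h2 i
    have h4 := (le_abs_self _).trans h
    calc ∑ i, |a i| = _ := h3.symm
      _ ≤ M := h4
      _ = _ := by simp
  | succ n ih =>
    have hn1 : (0:ℝ) < (n:ℝ) + 1 := by positivity
    have hn2 : (0:ℝ) < (n:ℝ) + 2 := by positivity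
    have hn3 : (0:ℝ) < (n:ℝ) + 3 := by positivity
    have hM : 0 ≤ M := (abs_nonneg _).trans (H (fun _ _ => 0) (by simp))
    have ee : (2 * (((n+1:ℕ):ℝ)+1) / (((n+1:ℕ):ℝ)+2)) = 2 * ((n:ℝ)+2) / ((n:ℝ)+3) := by
      push_cast; ring_nf
    rw [ee]
    set C : ℝ := Real.exp ((harmonic n : ℝ) / 2) with hC
    set C' : ℝ := Real.exp ((harmonic (n+1) : ℝ) / 2) with hC'
    have hC'0 : 0 < C' := Real.exp_pos _
    have hC0 : 0 < C := Real.exp_pos _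
    set p : ℝ := 2 * ((n:ℝ)+1) / ((n:ℝ)+2) with hp
    have hp0 : 0 < p := by positivity
    have hCC : Real.exp (1 / ((n:ℝ)+2)) * C ^ p = C' ^ p := by
      rw [hC, hC', ← Real.exp_mul, ← Real.exp_mul, ← Real.exp_add, harmonic_succ]
      congr 1
      rw [hp]
      push_cast
      field_simp
      ring
    have hB : ∀ j : Fin (n+2), ∑ y : Fin (n+1) → Fin N,
        (∑ x, |a (j.insertNth x y)| ^ 2) ^ (((n:ℝ) + 1) / ((n:ℝ) + 2)) ≤ (C' * M) ^ p := by
      intro j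
      have hk : ∀ y : Fin (n+1) → Fin N,
          2^N * (∑ x, |a (j.insertNth x y)| ^ 2) ^ (((n:ℝ) + 1) / ((n:ℝ) + 2)) ≤
          Real.exp (1 / ((n:ℝ)+2)) * ∑ s, |bhF (fun x => a (j.insertNth x y)) s| ^ p := by
        intro y
        have := bh_khin (fun x => a (j.insertNth x y)) (2 / ((n:ℝ)+2)) (by positivity)
          (by rw [div_lt_iff₀ hn2]; linarith)
        have e1 : 1 - 2 / ((n:ℝ)+2) / 2 = ((n:ℝ) + 1) / ((n:ℝ) + 2) := by field_simp; ring
        have e2 : 2 / ((n:ℝ)+2) / 2 = 1 / ((n:ℝ)+2) := by field_simp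
        have e3 : 2 - 2 / ((n:ℝ)+2) = p := by rw [hp]; field_simp; ring
        rw [e1, e2, e3] at this
        simpa only [sq_abs] using this
      have hs : ∀ s : Fin N → Bool,
          ∑ y : Fin (n+1) → Fin N, |bhF (fun x => a (j.insertNth x y)) s| ^ p ≤ (C * M) ^ p := by
        intro s
        apply ih (fun y => bhF (fun x => a (j.insertNth x y)) s) M
        intro z hz
        have := H (j.insertNth (fun x => bhSg (s x)) z) (by
          intro k x
          refine Fin.succAboveCases j ?_ (fun k => ?_) k
          · simp only [Fin.insertNth_apply_same]
            unfold bhSg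
            split <;> simp
          · simpa only [Fin.insertNth_apply_succAbove] using hz k x)
        rw [bh_sum_insert j] at this
        convert this using 3
        rename_i y _
        simp only [bhF]
        rw [Finset.sum_mul]
        apply Finset.sum_congr rfl
        intro x _
        rw [Fin.prod_univ_succAbove _ j]
        simp only [Fin.insertNth_apply_same, Fin.insertNth_apply_succAbove]
        ring
      have h2N : (0:ℝ) < 2^N := by positivity
      refine le_of_mul_le_mul_left ?_ h2N
      calc _ = ∑ y : Fin (n+1) → Fin N,
            2^N * (∑ x, |a (j.insertNth x y)| ^ 2) ^ (((n:ℝ) + 1) / ((n:ℝ) + 2)) := by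
              rw [Finset.mul_sum]
        _ ≤ ∑ y : Fin (n+1) → Fin N, Real.exp (1 / ((n:ℝ)+2)) *
              ∑ s, |bhF (fun x => a (j.insertNth x y)) s| ^ p :=
            Finset.sum_le_sum fun y _ => hk y
        _ = Real.exp (1 / ((n:ℝ)+2)) * ∑ s : Fin N → Bool, ∑ y : Fin (n+1) → Fin N,
              |bhF (fun x => a (j.insertNth x y)) s| ^ p := by
            rw [← Finset.mul_sum, Finset.sum_comm]
        _ ≤ Real.exp (1 / ((n:ℝ)+2)) * ∑ s : Fin N → Bool, (C * M) ^ p :=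
            mul_le_mul_of_nonneg_left (Finset.sum_le_sum fun s _ => hs s) (Real.exp_pos _).le
        _ = 2^N * (C' * M) ^ p := by
            rw [Real.mul_rpow hC'0.le hM, ← hCC, Real.mul_rpow hC0.le hM]
            simp
            ring
    refine (bh_blei n (fun i => |a i|) (fun i => abs_nonneg _)).trans ?_
    have hB0 : ∀ j : Fin (n+2), 0 ≤ ∑ y : Fin (n+1) → Fin N,
        (∑ x, |a (j.insertNth x y)| ^ 2) ^ (((n:ℝ) + 1) / ((n:ℝ) + 2)) := fun j =>
      Finset.sum_nonneg fun y _ => Real.rpow_nonneg (Finset.sum_nonneg fun x _ => sq_nonneg _) _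
    calc _ ≤ ∏ j : Fin (n+2), ((C' * M) ^ p) ^ (((n:ℝ) + 2) / (((n:ℝ) + 3) * ((n:ℝ) + 1))) := by
          apply Finset.prod_le_prod
          · intro j _
            exact Real.rpow_nonneg (hB0 j) _
          · intro j _
            exact Real.rpow_le_rpow (hB0 j) (hB j) (by positivity)
      _ = _ := by
          have hCM : 0 ≤ C' * M := mul_nonneg hC'0.le hM
          rw [Finset.prod_const, Finset.card_univ, Fintype.card_fin, ← Real.rpow_natCast,
            ← Real.rpow_mul hCM, ← Real.rpow_mul hCM]
          congr 1
          rw [hp]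
          push_cast
          field_simp

lemma bh_H16 : (harmonic 16 : ℝ) = 2436559 / 720720 := by
  have : harmonic 16 = 2436559 / 720720 := by
    simp [harmonic, Finset.sum_range_succ]
    norm_num
  rw [this]; norm_num

lemma bh_const (m : ℕ) (hm : 16 ≤ m) (D : ℝ)
    (hD : D = Real.exp (1 - Real.eulerMascheroniConstant / 2) / Real.sqrt 2) :
    Real.exp ((harmonic m : ℝ) / 2) ≤ 4 / D ^ 3 * (m : ℝ) ^ Real.logb 2 D := by
  have hl1 := Real.log_two_gt_d9
  have hl2 := Real.log_two_lt_d9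
  have hm0 : (0:ℝ) < m := by
    have : 0 < m := by omega
    exact_mod_cast this
  have hD0 : 0 < D := by rw [hD]; positivity
  have hL : Real.log D = 1 - Real.eulerMascheroniConstant / 2 - Real.log 2 / 2 := by
    rw [hD, Real.log_div (Real.exp_pos _).ne' (by positivity), Real.log_exp, Real.log_sqrt (by norm_num)]
  have hlog16 : Real.log 16 = 4 * Real.log 2 := by
    rw [show (16:ℝ) = 2^4 by norm_num, Real.log_pow]; norm_num
  have s16 : Real.eulerMascheroniSeq' 16 = 2436559 / 720720 - 4 * Real.log 2 := by
    simp only [Real.eulerMascheroniSeq']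
    rw [if_neg (by norm_num), bh_H16]
    push_cast
    rw [hlog16]
  have hγ := Real.eulerMascheroniConstant_lt_eulerMascheroniSeq' 16
  rw [s16] at hγ
  have hmono := Real.strictAnti_eulerMascheroniSeq'.antitone hm
  rw [s16] at hmono
  simp only [Real.eulerMascheroniSeq'] at hmono
  rw [if_neg (by omega)] at hmono
  have hLlow : Real.log 2 / 2 ≤ Real.log D := by rw [hL]; linarith
  have hlm : 4 * Real.log 2 ≤ Real.log m := by
    rw [← hlog16]
    apply Real.log_le_log (by norm_num)
    exact_mod_cast hm
  have hR : 4 / D ^ 3 * (m : ℝ) ^ Real.logb 2 D =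
      Real.exp (2 * Real.log 2 - 3 * Real.log D + Real.log m * (Real.log D / Real.log 2)) := by
    rw [Real.exp_add, Real.exp_sub, Real.rpow_def_of_pos hm0, Real.logb]
    congr 2
    · rw [show 2 * Real.log 2 = Real.log 4 by
        rw [show (4:ℝ) = 2^2 by norm_num, Real.log_pow]; norm_num, Real.exp_log (by norm_num)]
    · rw [show 3 * Real.log D = Real.log (D^3) by rw [Real.log_pow]; norm_num,
        Real.exp_log (by positivity)]
  rw [hR]
  apply Real.exp_le_exp.2
  have hl0 : 0 < Real.log 2 := by linarith
  have h5 : (Real.log 2 / 2) * (Real.log m / Real.log 2 - 3) ≤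
      Real.log D * (Real.log m / Real.log 2 - 3) := by
    apply mul_le_mul_of_nonneg_right hLlow
    have : 4 ≤ Real.log m / Real.log 2 := by rw [le_div_iff₀ hl0]; exact hlm
    linarith
  have h6 : (Real.log 2 / 2) * (Real.log m / Real.log 2 - 3) = Real.log m / 2 - 3/2 * Real.log 2 := by
    field_simp
  have h7 : Real.log D * (Real.log m / Real.log 2 - 3) =
      - 3 * Real.log D + Real.log m * (Real.log D / Real.log 2) := by
    field_simp; ring
  rw [h6, h7] at h5
  linarith

lemma bh_final (n N : ℕ) (hn : 1 ≤ n)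
    (U : ContinuousMultilinearMap ℝ (fun _ : Fin n => (Fin N → ℝ)) ℝ) :
    BHreal n N U ≤ Real.exp ((harmonic (n-1) : ℝ) / 2) * ‖U‖ := by
  obtain ⟨m, rfl⟩ : ∃ m, n = m + 1 := ⟨n - 1, by omega⟩
  have H := bh_main N m (fun i => U (fun k => Pi.single (i k) (1 : ℝ))) ‖U‖ (by
    intro z hz
    have h1 : U z = ∑ i : Fin (m+1) → Fin N, U (fun k => Pi.single (i k) (1 : ℝ)) * ∏ k, z k (i k) := by
      have hz' : z = fun k => ∑ x : Fin N, z k x • (Pi.single x (1:ℝ) : Fin N → ℝ) := by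
        funext k
        exact pi_eq_sum_univ' (z k)
      conv_lhs => rw [hz']
      rw [ContinuousMultilinearMap.map_sum]
      apply Finset.sum_congr rfl
      intro i _
      rw [ContinuousMultilinearMap.map_smul_univ, smul_eq_mul, mul_comm]
    rw [← h1, ← Real.norm_eq_abs]
    refine (U.le_opNorm z).trans ?_
    apply mul_le_of_le_one_right (norm_nonneg _)
    apply Finset.prod_le_one (fun k _ => norm_nonneg _)
    intro k _
    rw [pi_norm_le_iff_of_nonneg zero_le_one]
    exact fun x => hz k x)
  have hb : 0 ≤ Real.exp ((harmonic m : ℝ) / 2) * ‖U‖ := by positivity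
  unfold BHreal
  have e1 : (2 * ((m + 1 : ℕ) : ℝ)) / (((m+1 : ℕ) : ℝ) + 1) = 2 * ((m:ℝ)+1) / ((m:ℝ)+2) := by
    push_cast; ring_nf
  have e2 : (((m+1 : ℕ) : ℝ) + 1) / (2 * ((m + 1 : ℕ) : ℝ)) = (2 * ((m:ℝ)+1) / ((m:ℝ)+2))⁻¹ := by
    rw [inv_div]; push_cast; ring_nf
  rw [e1, e2, Nat.add_sub_cancel]
  have hq : (0:ℝ) < 2 * ((m:ℝ)+1) / ((m:ℝ)+2) := by positivity
  calc _ ≤ ((Real.exp ((harmonic m : ℝ) / 2) * ‖U‖) ^ (2 * ((m:ℝ)+1) / ((m:ℝ)+2))) ^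
        (2 * ((m:ℝ)+1) / ((m:ℝ)+2))⁻¹ := by
        apply Real.rpow_le_rpow _ H (by positivity)
        exact Finset.sum_nonneg fun i _ => Real.rpow_nonneg (abs_nonneg _) _
    _ = _ := Real.rpow_rpow_inv hb hq.ne'

theorem stmt4 (n : ℕ) (hn : 16 < n)
    (D : ℝ) (hD : D = Real.exp (1 - Real.eulerMascheroniConstant / 2) / Real.sqrt 2) :
    (∀ N : ℕ, 0 < N →
      ∀ U : ContinuousMultilinearMap ℝ (fun _ : Fin n => (Fin N → ℝ)) ℝ,
        BHreal n N U ≤ 4 / D ^ 3 * ((n : ℝ) - 1) ^ Real.logb 2 D * ‖U‖) ∧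
    KrealOpt n ≤ 4 / D ^ 3 * ((n : ℝ) - 1) ^ Real.logb 2 D := by
  have hC := bh_const (n - 1) (by omega) D hD
  rw [Nat.cast_sub (by omega : 1 ≤ n), Nat.cast_one] at hC
  have h1 : ∀ N : ℕ, 0 < N →
      ∀ U : ContinuousMultilinearMap ℝ (fun _ : Fin n => (Fin N → ℝ)) ℝ,
        BHreal n N U ≤ 4 / D ^ 3 * ((n : ℝ) - 1) ^ Real.logb 2 D * ‖U‖ := fun N _ U =>
    (bh_final n N (by omega) U).trans (mul_le_mul_of_nonneg_right hC (norm_nonneg _))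
  refine ⟨h1, ?_⟩
  apply csInf_le ⟨1, fun C hC => hC.1⟩
  refine ⟨le_trans ?_ hC, h1⟩
  apply Real.one_le_exp
  have : (0:ℚ) ≤ harmonic (n - 1) := by
    unfold harmonic
    exact Finset.sum_nonneg fun i _ => by positivity
  have : (0:ℝ) ≤ (harmonic (n - 1) : ℝ) := by exact_mod_cast this
  linarith
end

section
/- For every integer n > 16, every positive integer N, and every n-linear form U : (ℝ^N)^n → ℝ, one has (∑_{i₁,…,iₙ=1}^N |U(e_{i₁},…,e_{iₙ})|^{2n/(n+1)})^{(n+1)/(2n)} < 1.338887 · (n-1)^{0.526322} · ‖U‖, provided ‖U‖ > 0. -/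
open Real

lemma holder_multi {α ι : Type*} [Fintype α] (s : Finset ι) (f : ι → α → ℝ)
    (hf : ∀ i a, 0 ≤ f i a) (w : ι → ℝ) (hw : ∑ i ∈ s, w i = 1) (hw0 : ∀ i ∈ s, 0 ≤ w i) :
    ∑ a, ∏ i ∈ s, (f i a) ^ (w i) ≤ ∏ i ∈ s, (∑ a, f i a) ^ (w i) := by
  let _ : MeasurableSpace α := ⊤
  have h := ENNReal.lintegral_prod_norm_pow_le (μ := MeasureTheory.Measure.count) s
    (f := fun i a => ENNReal.ofReal (f i a)) (fun i _ => (measurable_from_top).aemeasurable) hw hw0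
  rw [MeasureTheory.lintegral_fintype] at h
  simp only [MeasureTheory.lintegral_fintype, MeasureTheory.Measure.count_singleton, mul_one] at h
  have e1 : ∑ a, ∏ i ∈ s, ENNReal.ofReal (f i a) ^ (w i)
      = ENNReal.ofReal (∑ a, ∏ i ∈ s, (f i a) ^ (w i)) := by
    rw [ENNReal.ofReal_sum_of_nonneg]
    · refine Finset.sum_congr rfl fun a _ => ?_
      rw [ENNReal.ofReal_prod_of_nonneg]
      · refine Finset.prod_congr rfl fun i hi => ?_
        rw [ENNReal.ofReal_rpow_of_nonneg (hf i a) (hw0 i hi)]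
      · intro i _; exact rpow_nonneg (hf i a) _
    · intro a _; exact Finset.prod_nonneg fun i _ => rpow_nonneg (hf i a) _
  have e2 : ∏ i ∈ s, (∑ a, ENNReal.ofReal (f i a)) ^ (w i)
      = ENNReal.ofReal (∏ i ∈ s, (∑ a, f i a) ^ (w i)) := by
    rw [ENNReal.ofReal_prod_of_nonneg]
    · refine Finset.prod_congr rfl fun i hi => ?_
      rw [← ENNReal.ofReal_rpow_of_nonneg (Finset.sum_nonneg fun a _ => hf i a) (hw0 i hi),
        ENNReal.ofReal_sum_of_nonneg]
      exact fun a _ => hf i a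
    · intro i _; exact rpow_nonneg (Finset.sum_nonneg fun a _ => hf i a) _
  rw [e1, e2] at h
  exact (ENNReal.ofReal_le_ofReal_iff
    (Finset.prod_nonneg fun i _ => rpow_nonneg (Finset.sum_nonneg fun a _ => hf i a) _)).1 h

lemma holder_two {α : Type*} [Fintype α] (f g : α → ℝ) (hf : ∀ a, 0 ≤ f a) (hg : ∀ a, 0 ≤ g a)
    (u v : ℝ) (hu : 0 ≤ u) (hv : 0 ≤ v) (huv : u + v = 1) :
    ∑ a, f a ^ u * g a ^ v ≤ (∑ a, f a) ^ u * (∑ a, g a) ^ v := by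
  have := holder_multi (Finset.univ : Finset (Fin 2)) ![f, g]
    (by intro i; fin_cases i <;> simp [hf, hg]) ![u, v] (by simp [huv])
    (by intro i _; fin_cases i <;> simp [hu, hv])
  simpa using this

lemma sum_cons {n N : ℕ} (F : (Fin (n+1) → Fin N) → ℝ) :
    ∑ i, F i = ∑ x, ∑ y : Fin n → Fin N, F (Fin.cons x y) := by
  rw [← Fintype.sum_prod_type' (f := fun x y => F (Fin.cons x y))]
  exact (Fintype.sum_equiv (Fin.consEquiv (fun _ => Fin N)) _ _ (fun x => rfl)).symm

lemma sum_insertNth {n N : ℕ} (j : Fin (n+1)) (F : (Fin (n+1) → Fin N) → ℝ) :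
    ∑ i, F i = ∑ y : Fin n → Fin N, ∑ x, F (j.insertNth x y) := by
  rw [Finset.sum_comm]
  rw [← Fintype.sum_prod_type' (f := fun x (y : Fin n → Fin N) =>
    F (j.insertNth (α := fun _ => Fin N) x y))]
  exact (Fintype.sum_equiv (Fin.insertNthEquiv (fun _ => Fin N) j) _ _ (fun x => rfl)).symm

lemma removeNth_cons {n N : ℕ} (j : Fin (n+1)) (x : Fin N) (y : Fin (n+1) → Fin N) :
    (j.succ).removeNth (Fin.cons x y : Fin (n+2) → Fin N)
      = (Fin.cons x (j.removeNth y) : Fin (n+1) → Fin N) := by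
  funext i
  refine Fin.cases ?_ (fun i => ?_) i <;> simp [Fin.removeNth]

lemma LW (N n : ℕ) : ∀ (g : Fin (n+2) → (Fin (n+1) → Fin N) → ℝ) (_ : ∀ j y, 0 ≤ g j y),
    ∑ i : Fin (n+2) → Fin N, ∏ j, (g j (j.removeNth i)) ^ (1/((n:ℝ)+1))
      ≤ ∏ j, (∑ y, g j y) ^ (1/((n:ℝ)+1)) := by
  induction n with
  | zero =>
    intro g hg
    simp only [Nat.cast_zero, zero_add, div_one, rpow_one]
    rw [Fin.prod_univ_two, sum_cons, Finset.sum_comm]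
    have : ∀ (y : Fin 1 → Fin N) (x : Fin N), ∏ j : Fin 2, g j (j.removeNth (Fin.cons x y : Fin 2 → Fin N))
        = g 0 y * g 1 (fun _ => x) := by
      intro y x
      rw [Fin.prod_univ_two]
      congr 2
      funext i
      fin_cases i
      simp [Fin.removeNth]
    simp only [Nat.reduceAdd] at *
    simp only [this]
    simp only [← Finset.mul_sum, ← Finset.sum_mul]
    apply le_of_eq
    congr 1
    rw [sum_cons]
    refine Finset.sum_congr rfl fun x _ => ?_
    simp
    congr 1
    funext i
    fin_cases i
    rfl
  | succ n ih =>
    intro g hg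
    have hn1 : (0:ℝ) < (n:ℝ) + 1 := by positivity
    have hn2 : (0:ℝ) < (n:ℝ) + 2 := by positivity
    push_cast
    rw [show (n:ℝ) + 1 + 1 = n + 2 by ring]
    set r : ℝ := 1/((n:ℝ)+2) with hr
    have hr0 : 0 ≤ r := by positivity
    have hr1 : 0 ≤ 1 - r := by
      have : 1 - r = ((n:ℝ)+1)/((n:ℝ)+2) := by rw [hr]; field_simp; ring
      rw [this]; positivity
    have hrr : 1/((n:ℝ)+1) * (1 - r) = r := by
      rw [hr]; field_simp; ring
    rw [sum_cons, Fin.prod_univ_succ (n := n+2)]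
    have key : ∀ x : Fin N, ∑ y : Fin (n+2) → Fin N,
        ∏ j, (g j (j.removeNth (Fin.cons x y : Fin (n+3) → Fin N))) ^ r
        ≤ (∑ y, g 0 y) ^ r *
          ∏ j : Fin (n+2), (∑ z : Fin (n+1) → Fin N, g j.succ (Fin.cons x z)) ^ r := by
      intro x
      have hnn : ∀ y : Fin (n+2) → Fin N, 0 ≤ ∏ j : Fin (n+2),
          (g j.succ (Fin.cons x (j.removeNth y))) ^ (1/((n:ℝ)+1)) :=
        fun y => Finset.prod_nonneg fun j _ => rpow_nonneg (hg _ _) _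
      calc _ = ∑ y : Fin (n+2) → Fin N, (g 0 y) ^ r *
          (∏ j : Fin (n+2), (g j.succ (Fin.cons x (j.removeNth y))) ^ (1/((n:ℝ)+1))) ^ (1-r) := by
            refine Finset.sum_congr rfl fun y _ => ?_
            rw [Fin.prod_univ_succ (n := n+2)]
            congr 1
            rw [← Real.finsetProd_rpow _ _ (fun j _ => rpow_nonneg (hg _ _) _)]
            refine Finset.prod_congr rfl fun j _ => ?_
            rw [← rpow_mul (hg _ _), hrr, removeNth_cons]
        _ ≤ (∑ y, g 0 y) ^ r * (∑ y : Fin (n+2) → Fin N, ∏ j : Fin (n+2),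
            (g j.succ (Fin.cons x (j.removeNth y))) ^ (1/((n:ℝ)+1))) ^ (1-r) :=
            holder_two _ _ (hg 0) hnn r (1-r) hr0 hr1 (by ring)
        _ ≤ (∑ y, g 0 y) ^ r * (∏ j : Fin (n+2),
            (∑ z : Fin (n+1) → Fin N, g j.succ (Fin.cons x z)) ^ (1/((n:ℝ)+1))) ^ (1-r) := by
            refine mul_le_mul_of_nonneg_left ?_ (rpow_nonneg (Finset.sum_nonneg fun y _ => hg _ _) _)
            refine rpow_le_rpow (Finset.sum_nonneg fun y _ => hnn y) ?_ hr1
            exact ih (fun j z => g j.succ (Fin.cons x z)) (fun j z => hg _ _)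
        _ = _ := by
            congr 1
            rw [← Real.finsetProd_rpow _ _ (fun j _ => rpow_nonneg (Finset.sum_nonneg fun y _ => hg _ _) _)]
            refine Finset.prod_congr rfl fun j _ => ?_
            rw [← rpow_mul (Finset.sum_nonneg fun y _ => hg _ _), hrr]
    refine (Finset.sum_le_sum fun x _ => key x).trans ?_
    rw [← Finset.mul_sum]
    refine mul_le_mul_of_nonneg_left ?_ (rpow_nonneg (Finset.sum_nonneg fun y _ => hg _ _) _)
    refine (holder_multi Finset.univ (fun (j : Fin (n+2)) x => ∑ z : Fin (n+1) → Fin N, g j.succ (Fin.cons x z))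
      (fun j x => Finset.sum_nonneg fun y _ => hg _ _) (fun _ => r) ?_ (fun _ _ => hr0)).trans ?_
    · simp [hr]; field_simp
    · apply le_of_eq
      refine Finset.prod_congr rfl fun j _ => ?_
      rw [sum_cons (g j.succ)]

lemma blei (N k : ℕ) (hk : 1 ≤ k) (f : (Fin (k+1) → Fin N) → ℝ) (hf : ∀ i, 0 ≤ f i) (D : ℝ)
    (hD : ∀ j : Fin (k+1), ∑ y : Fin k → Fin N,
      (∑ x, f (j.insertNth x y) ^ 2) ^ ((k:ℝ)/(k+1)) ≤ D) :
    ∑ i, f i ^ (2 * ((k:ℝ)+1)/(k+2)) ≤ D ^ (((k:ℝ)+1)^2/((k+2)*k)) := by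
  obtain ⟨n, rfl⟩ : ∃ n, k = n + 1 := ⟨k-1, by omega⟩
  set K : ℝ := ((n+1 : ℕ):ℝ) with hK
  have hK0 : 0 < K := by rw [hK]; positivity
  set F : Fin (n+2) → (Fin (n+1) → Fin N) → ℝ := fun j y => ∑ x, f (j.insertNth x y) ^ 2 with hF
  have hF0 : ∀ j y, 0 ≤ F j y := fun j y => Finset.sum_nonneg fun x _ => sq_nonneg _
  have hD0 : 0 ≤ D := le_trans (Finset.sum_nonneg fun y _ => rpow_nonneg (hF0 0 y) _) (hD 0)
  have hfF : ∀ (i : Fin (n+2) → Fin N) (j : Fin (n+2)), f i ^ 2 ≤ F j (j.removeNth i) := by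
    intro i j
    have : f i ^ 2 = f (j.insertNth (i j) (j.removeNth i)) ^ 2 := by simp
    rw [this]
    exact Finset.single_le_sum (f := fun x => f (j.insertNth x (j.removeNth i)) ^ 2)
      (fun x _ => sq_nonneg _) (Finset.mem_univ (i j))
  set h : Option (Fin (n+2)) → (Fin (n+2) → Fin N) → ℝ := fun o i =>
    o.elim (∏ j, (F j (j.removeNth i) ^ (K/(K+1))) ^ (1/K))
      (fun j => f i ^ 2 * F j (j.removeNth i) ^ (K/(K+1) - 1)) with hh
  have hh0 : ∀ o i, 0 ≤ h o i := by
    intro o i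
    rcases o with _ | j
    · exact Finset.prod_nonneg fun j _ => rpow_nonneg (rpow_nonneg (hF0 _ _) _) _
    · exact mul_nonneg (sq_nonneg _) (rpow_nonneg (hF0 _ _) _)
  have hcard : ((n + 2 : ℕ) : ℝ) = K + 1 := by rw [hK]; push_cast; ring
  have step1 : ∀ i, f i ^ (2 * (K+1)/(K+2)) ≤ ∏ o, h o i ^ (1/(K+2)) := by
    intro i
    rcases (hf i).eq_or_lt with h0 | h0
    · rw [← h0, zero_rpow (by positivity)]
      exact Finset.prod_nonneg fun o _ => rpow_nonneg (hh0 _ _) _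
    · have hFp : ∀ j, 0 < F j (j.removeNth i) := fun j => lt_of_lt_of_le (by positivity) (hfF i j)
      apply le_of_eq
      rw [Fintype.prod_option]
      simp only [hh, Option.elim]
      rw [← Real.finsetProd_rpow _ _ (fun j _ => rpow_nonneg (rpow_nonneg (hF0 _ _) _) _),
        ← Finset.prod_mul_distrib]
      have : ∀ j : Fin (n+2), ((F j (j.removeNth i) ^ (K/(K+1))) ^ (1/K)) ^ (1/(K+2)) *
          (f i ^ 2 * F j (j.removeNth i) ^ (K/(K+1) - 1)) ^ (1/(K+2)) = f i ^ (2/(K+2)) := by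
        intro j
        have hp := hFp j
        rw [mul_rpow (by positivity) (by positivity), ← rpow_mul hp.le, ← rpow_mul hp.le,
          ← rpow_mul hp.le, mul_left_comm, ← rpow_add hp]
        have e : K/(K+1) * (1/K) * (1/(K+2)) + (K/(K+1) - 1) * (1/(K+2)) = 0 := by
          field_simp; ring
        rw [e, rpow_zero, mul_one, ← rpow_natCast, ← rpow_mul h0.le]
        congr 1
        push_cast; ring
      rw [Finset.prod_congr rfl fun j _ => this j, Finset.prod_const, ← rpow_natCast,
        ← rpow_mul h0.le]
      congr 1
      simp only [Finset.card_univ, Fintype.card_fin]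
      rw [hcard]; ring
  have step2 := holder_multi Finset.univ h hh0 (fun _ => 1/(K+2))
    (by simp only [Finset.sum_const, Finset.card_univ, Fintype.card_option, Fintype.card_fin,
          nsmul_eq_mul]
        rw [Nat.cast_add, hcard]; push_cast; field_simp; ring)
    (fun _ _ => by positivity)
  refine (Finset.sum_le_sum fun i _ => step1 i).trans (step2.trans ?_)
  rw [Fintype.prod_option]
  have hnone : ∑ i, h none i ≤ D ^ ((K+1)/K) := by
    have := LW N n (fun j y => F j y ^ (K/(K+1))) (fun j y => rpow_nonneg (hF0 _ _) _)
    rw [show (n:ℝ)+1 = K by rw [hK]; push_cast; ring] at this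
    refine this.trans ?_
    calc _ ≤ ∏ j : Fin (n+2), D ^ (1/K) :=
          Finset.prod_le_prod (fun j _ => rpow_nonneg (Finset.sum_nonneg fun y _ => rpow_nonneg (hF0 _ _) _) _)
            (fun j _ => rpow_le_rpow (Finset.sum_nonneg fun y _ => rpow_nonneg (hF0 _ _) _) (hD j) (by positivity))
      _ = _ := by
          rw [Finset.prod_const, ← rpow_natCast, ← rpow_mul hD0]
          simp only [Finset.card_univ, Fintype.card_fin]
          rw [hcard]; congr 1; ring
  have hsome : ∀ j, ∑ i, h (some j) i ≤ D := by
    intro j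
    refine le_trans ?_ (hD j)
    rw [sum_insertNth j]
    refine Finset.sum_le_sum fun y _ => ?_
    simp only [hh, Option.elim, Fin.removeNth_insertNth]
    rw [← Finset.sum_mul]
    change F j y * F j y ^ (K/(K+1) - 1) ≤ F j y ^ (K/(K+1))
    rcases (hF0 j y).eq_or_lt with h0 | h0
    · rw [← h0, zero_mul]; exact rpow_nonneg le_rfl _
    · apply le_of_eq
      nth_rewrite 1 [← rpow_one (F j y)]
      rw [← rpow_add h0]; congr 1; ring
  calc _ ≤ (D ^ ((K+1)/K)) ^ (1/(K+2)) * ∏ j : Fin (n+2), D ^ (1/(K+2)) := by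
        refine mul_le_mul ?_ ?_ (Finset.prod_nonneg fun j _ => rpow_nonneg (Finset.sum_nonneg fun y _ => hh0 _ _) _) (by positivity)
        · exact rpow_le_rpow (Finset.sum_nonneg fun y _ => hh0 _ _) hnone (by positivity)
        · exact Finset.prod_le_prod (fun j _ => rpow_nonneg (Finset.sum_nonneg fun y _ => hh0 _ _) _)
            (fun j _ => rpow_le_rpow (Finset.sum_nonneg fun y _ => hh0 _ _) (hsome j) (by positivity))
    _ = _ := by
        rw [Finset.prod_const, ← rpow_natCast, ← rpow_mul hD0, ← rpow_mul hD0]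
        simp only [Finset.card_univ, Fintype.card_fin]
        rw [hcard, ← rpow_add_of_nonneg hD0 (by positivity) (by positivity)]
        congr 1; field_simp; ring

noncomputable def sg (b : Bool) : ℝ := if b then 1 else -1

noncomputable def SS {N : ℕ} (a : Fin N → ℝ) (ε : Fin N → Bool) : ℝ := ∑ x, sg (ε x) * a x

lemma sum_bool_cons {N : ℕ} (a : Fin (N+1) → ℝ) (F : ℝ → ℝ) :
    ∑ ε, F (SS a ε) = ∑ ε : Fin N → Bool,
      (F (SS (Fin.tail a) ε + a 0) + F (SS (Fin.tail a) ε - a 0)) := by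
  rw [← Fintype.sum_equiv (Fin.consEquiv (fun _ => Bool))
    (fun q => F (SS a (Fin.cons q.1 q.2))) _ (fun x => rfl)]
  rw [Fintype.sum_prod_type, Finset.sum_comm]
  refine Finset.sum_congr rfl fun ε _ => ?_
  rw [Fintype.sum_bool]
  simp only [SS, Fin.sum_univ_succ, Fin.cons_zero, Fin.cons_succ, sg, Fin.tail]
  simp
  congr 2 <;> ring

lemma moments : ∀ (N : ℕ) (a : Fin N → ℝ),
    (∑ ε, (SS a ε)^2 = 2^N * ∑ x, a x ^2) ∧
    (∑ ε, (SS a ε)^4 = 2^N * (3 * (∑ x, a x ^2)^2 - 2 * ∑ x, a x ^4)) ∧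
    (∑ ε, (SS a ε)^6 = 2^N * (15 * (∑ x, a x ^2)^3 - 30 * (∑ x, a x ^2) * (∑ x, a x ^4)
      + 16 * ∑ x, a x ^6)) ∧
    (∑ ε, (SS a ε)^8 = 2^N * (105 * (∑ x, a x ^2)^4 - 420 * (∑ x, a x ^2)^2 * (∑ x, a x ^4)
      + 448 * (∑ x, a x ^2) * (∑ x, a x ^6) + 140 * (∑ x, a x ^4)^2 - 272 * ∑ x, a x ^8)) := by
  intro N
  induction N with
  | zero => intro a; simp [SS]
  | succ N ih =>
    intro a
    obtain ⟨h2, h4, h6, h8⟩ := ih (Fin.tail a)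
    have h0 : ∑ ε : Fin N → Bool, (1:ℝ) = 2^N := by simp
    rw [sum_bool_cons a (fun x => x^2), sum_bool_cons a (fun x => x^4),
      sum_bool_cons a (fun x => x^6), sum_bool_cons a (fun x => x^8)]
    simp only [Fin.sum_univ_succ (fun x => a x ^ _)]
    simp only [Fin.tail] at h2 h4 h6 h8
    set b := a 0
    set T : (Fin N → Bool) → ℝ := fun ε => SS (Fin.tail a) ε with hT
    refine ⟨?_, ?_, ?_, ?_⟩
    · have : ∀ ε : Fin N → Bool, (SS (Fin.tail a) ε + b)^2 + (SS (Fin.tail a) ε - b)^2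
        = 2 * (SS (Fin.tail a) ε)^2 + 2 * b^2 * 1 := by intro ε; ring
      simp only [this, Finset.sum_add_distrib, ← Finset.mul_sum, h0]
      simp only [Fin.tail_def] at *
      rw [h2]; ring
    · have : ∀ ε : Fin N → Bool, (SS (Fin.tail a) ε + b)^4 + (SS (Fin.tail a) ε - b)^4
        = 2 * (SS (Fin.tail a) ε)^4 + 12 * b^2 * (SS (Fin.tail a) ε)^2 + 2 * b^4 * 1 := by
          intro ε; ring
      simp only [this, Finset.sum_add_distrib, ← Finset.mul_sum, h0]
      simp only [Fin.tail_def] at *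
      rw [h2, h4]; ring
    · have : ∀ ε : Fin N → Bool, (SS (Fin.tail a) ε + b)^6 + (SS (Fin.tail a) ε - b)^6
        = 2 * (SS (Fin.tail a) ε)^6 + 30 * b^2 * (SS (Fin.tail a) ε)^4
          + 30 * b^4 * (SS (Fin.tail a) ε)^2 + 2 * b^6 * 1 := by
          intro ε; ring
      simp only [this, Finset.sum_add_distrib, ← Finset.mul_sum, h0]
      simp only [Fin.tail_def] at *
      rw [h2, h4, h6]; ring
    · have : ∀ ε : Fin N → Bool, (SS (Fin.tail a) ε + b)^8 + (SS (Fin.tail a) ε - b)^8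
        = 2 * (SS (Fin.tail a) ε)^8 + 56 * b^2 * (SS (Fin.tail a) ε)^6
          + 140 * b^4 * (SS (Fin.tail a) ε)^4
          + 56 * b^6 * (SS (Fin.tail a) ε)^2 + 2 * b^8 * 1 := by
          intro ε; ring
      simp only [this, Finset.sum_add_distrib, ← Finset.mul_sum, h0]
      simp only [Fin.tail_def] at *
      rw [h2, h4, h6, h8]; ring

lemma poly_bound (x : ℝ) (hx : 0 ≤ x) :
    x ^ 3 ≤ 11/18 * x^2 + 25/54 * x^4 - 8/243 * x^6 + 8/6561 * x^8 := by
  have : 11/18 * x^2 + 25/54 * x^4 - 8/243 * x^6 + 8/6561 * x^8 - x^3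
    = 8/6561 * x^2 * ((x-3/2)*(x-3))^2 * (x^2 + 9 * x + 99/4) := by ring
  have h : 0 ≤ 8/6561 * x^2 * ((x-3/2)*(x-3))^2 * (x^2 + 9 * x + 99/4) := by positivity
  linarith

lemma third_moment (N : ℕ) (a : Fin N → ℝ) (ha : ∑ x, a x ^ 2 = 1) :
    ∑ ε, |SS a ε| ^ 3 ≤ 2^N * (5/3) := by
  obtain ⟨h2, h4, h6, h8⟩ := moments N a
  have ha1 : ∀ x, a x ^ 2 ≤ 1 := by
    intro x; rw [← ha]
    exact Finset.single_le_sum (f := fun x => a x ^ 2) (fun x _ => sq_nonneg _) (Finset.mem_univ x)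
  have s0 : 0 ≤ ∑ x, a x ^ 4 := Finset.sum_nonneg fun x _ => by positivity
  have u0 : 0 ≤ ∑ x, a x ^ 8 := Finset.sum_nonneg fun x _ => by positivity
  have s1 : ∑ x, a x ^ 4 ≤ 1 := by
    rw [← ha]; refine Finset.sum_le_sum fun x _ => ?_
    nlinarith [ha1 x, sq_nonneg (a x)]
  have t1 : ∑ x, a x ^ 6 ≤ ∑ x, a x ^ 4 := by
    refine Finset.sum_le_sum fun x _ => ?_
    have : 0 ≤ a x ^ 4 := by positivity
    nlinarith [ha1 x]
  calc ∑ ε, |SS a ε| ^ 3 ≤ ∑ ε, (11/18 * (SS a ε)^2 + 25/54 * (SS a ε)^4 - 8/243 * (SS a ε)^6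
        + 8/6561 * (SS a ε)^8) := by
        refine Finset.sum_le_sum fun ε _ => ?_
        have := poly_bound |SS a ε| (abs_nonneg _)
        rwa [Even.pow_abs (show Even 2 by decide), Even.pow_abs (show Even 4 by decide),
          Even.pow_abs (show Even 6 by decide), Even.pow_abs (show Even 8 by decide)] at this
    _ ≤ _ := by
        simp only [Finset.sum_add_distrib, Finset.sum_sub_distrib, ← Finset.mul_sum]
        rw [h2, h4, h6, h8, ha]
        set s := ∑ x, a x ^ 4
        set t := ∑ x, a x ^ 6
        set u := ∑ x, a x ^ 8
        have : 11/18 * 1 + 25/54 * (3 * 1^2 - 2 * s) - 8/243 * (15 * 1^3 - 30 * 1 * s + 16 * t)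
          + 8/6561 * (105 * 1^4 - 420 * 1^2 * s + 448 * 1 * t + 140 * s^2 - 272 * u) ≤ 5/3 := by
          nlinarith
        have hp : (0:ℝ) < 2^N := by positivity
        have := mul_le_mul_of_nonneg_left this hp.le
        linarith

lemma khin_norm (N : ℕ) (a : Fin N → ℝ) (ha : ∑ x, a x ^ 2 = 1) (p : ℝ) (hp0 : 0 < p)
    (hp2 : p < 2) :
    2^N ≤ (5/3:ℝ)^(2-p) * ∑ ε, |SS a ε| ^ p := by
  have h3 := third_moment N a ha
  have h2 := (moments N a).1
  rw [ha, mul_one] at h2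
  have hq : 0 < 3 - p := by linarith
  have key := holder_two (fun ε => |SS a ε| ^ p) (fun ε => |SS a ε| ^ 3)
    (fun ε => by positivity) (fun ε => by positivity) (1/(3-p)) ((2-p)/(3-p)) (by positivity)
    (div_nonneg (by linarith) hq.le) (by field_simp; ring)
  have e : ∀ ε, (|SS a ε| ^ p) ^ (1/(3-p)) * (|SS a ε| ^ 3) ^ ((2-p)/(3-p)) = SS a ε ^ 2 := by
    intro ε
    rw [← sq_abs (SS a ε)]
    rcases (abs_nonneg (SS a ε)).eq_or_lt with h0 | h0
    · rw [← h0, zero_rpow hp0.ne', zero_rpow (by positivity)]; simp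
    · rw [← rpow_natCast, ← rpow_natCast, ← rpow_mul h0.le, ← rpow_mul h0.le, ← rpow_add h0]
      congr 1
      push_cast; field_simp; ring
  simp only [e] at key
  rw [h2] at key
  set A := ∑ ε, |SS a ε| ^ p with hA
  have hA0 : 0 ≤ A := Finset.sum_nonneg fun ε _ => by positivity
  have key2 : (2:ℝ)^N ≤ A ^ (1/(3-p)) * (2^N * (5/3)) ^ ((2-p)/(3-p)) := by
    refine key.trans (mul_le_mul_of_nonneg_left ?_ (by positivity))
    exact rpow_le_rpow (Finset.sum_nonneg fun ε _ => by positivity) h3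
      (div_nonneg (by linarith) hq.le)
  have key3 := rpow_le_rpow (by positivity) key2 hq.le
  rw [mul_rpow (by positivity) (by positivity), ← rpow_mul hA0, ← rpow_mul (by positivity),
    div_mul_cancel₀ _ hq.ne', div_mul_cancel₀ _ hq.ne', rpow_one,
    mul_rpow (by positivity) (by positivity),
    show 3 - p = (2 - p) + 1 by ring, rpow_add (by positivity), rpow_one] at key3
  have hpos : (0:ℝ) < (2^N) ^ (2-p) := by positivity
  nlinarith

lemma khinchine (N : ℕ) (a : Fin N → ℝ) (p : ℝ) (hp0 : 0 < p) (hp2 : p < 2) :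
    2^N * (∑ x, a x ^ 2) ^ (p/2) ≤ (5/3:ℝ)^(2-p) * ∑ ε, |SS a ε| ^ p := by
  have hm0 : 0 ≤ ∑ x, a x ^ 2 := Finset.sum_nonneg fun x _ => sq_nonneg _
  rcases hm0.eq_or_lt with h0 | h0
  · rw [← h0, zero_rpow (by positivity), mul_zero]; positivity
  set m := ∑ x, a x ^ 2 with hm
  have hs : 0 < √m := sqrt_pos.2 h0
  have h := khin_norm N (fun x => a x / √m) (by
    simp only [div_pow, sq_sqrt h0.le, ← Finset.sum_div, ← hm]
    exact div_self h0.ne') p hp0 hp2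
  have e : ∀ ε, |SS (fun x => a x / √m) ε| ^ p = |SS a ε| ^ p / m ^ (p/2) := by
    intro ε
    have : SS (fun x => a x / √m) ε = SS a ε / √m := by
      simp only [SS, Finset.sum_div, mul_div_assoc]
    rw [this, abs_div, abs_of_pos hs, div_rpow (abs_nonneg _) hs.le, sqrt_eq_rpow,
      ← rpow_mul h0.le]
    congr 2; ring
  simp only [e, ← Finset.sum_div] at h
  have hmp : 0 < m ^ (p/2) := by positivity
  rw [← mul_div_assoc, le_div_iff₀ hmp] at h
  exact h

noncomputable def BC (k : ℕ) : ℝ := (5/3:ℝ) ^ (∑ i ∈ Finset.range k, 1/((i:ℝ)+1))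

lemma BC_pos (k : ℕ) : 0 < BC k := by unfold BC; positivity

lemma form_expand {k N : ℕ}
    (U : ContinuousMultilinearMap ℝ (fun _ : Fin (k+1) => (Fin N → ℝ)) ℝ) (j : Fin (k+1))
    (v : Fin N → ℝ) (z : Fin k → Fin N → ℝ) :
    U.curryMid j v z = ∑ x, v x * U (j.insertNth (Pi.single x (1:ℝ)) z) := by
  have h := LinearMap.pi_apply_eq_sum_univ (U.curryMid j).toLinearMap v
  have h2 := congrArg (fun W : ContinuousMultilinearMap ℝ (fun _ : Fin k => (Fin N → ℝ)) ℝ => W z) h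
  simp only [ContinuousLinearMap.coe_coe] at h2
  rw [h2]
  rw [_root_.sum_apply]
  refine Finset.sum_congr rfl fun x _ => ?_
  rw [_root_.smul_apply, ContinuousMultilinearMap.curryMid_apply, smul_eq_mul]
  congr 4
  funext i
  simp [Pi.single_apply, eq_comm]

lemma curry_norm {k N : ℕ}
    (U : ContinuousMultilinearMap ℝ (fun _ : Fin (k+1) => (Fin N → ℝ)) ℝ) (j : Fin (k+1))
    (v : Fin N → ℝ) (hv : ∀ x, |v x| ≤ 1) : ‖U.curryMid j v‖ ≤ ‖U‖ := by
  have h := (U.curryMid j).le_opNorm v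
  have hv' : ‖v‖ ≤ 1 := (pi_norm_le_iff_of_nonneg zero_le_one).2 hv
  rw [ContinuousMultilinearMap.norm_curryMid] at h
  nlinarith [norm_nonneg U]

lemma single_insertNth {k N : ℕ} (j : Fin (k+1)) (x : Fin N) (y : Fin k → Fin N) :
    (fun l => (Pi.single ((j.insertNth x y : Fin (k+1) → Fin N) l) (1:ℝ) : Fin N → ℝ))
      = j.insertNth (Pi.single x (1:ℝ)) (fun l => (Pi.single (y l) (1:ℝ) : Fin N → ℝ)) := by
  funext l
  refine Fin.succAboveCases j ?_ (fun l => ?_) l <;> simp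

lemma BH_main (N k : ℕ) : ∀ (U : ContinuousMultilinearMap ℝ (fun _ : Fin (k+1) => (Fin N → ℝ)) ℝ),
    ∑ i : Fin (k+1) → Fin N, |U (fun l => Pi.single (i l) (1 : ℝ))| ^ (2 * ((k:ℝ)+1)/(k+2))
      ≤ (BC k * ‖U‖) ^ (2 * ((k:ℝ)+1)/(k+2)) := by
  induction k with
  | zero =>
    intro U
    have e : (2 * (((0:ℕ):ℝ)+1)/((0:ℕ)+2)) = 1 := by norm_num
    simp only [e, rpow_one]
    have hB : BC 0 = 1 := by simp [BC]
    rw [hB, one_mul, sum_insertNth 0]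
    simp only [single_insertNth]
    rw [Fintype.sum_unique]
    set z : Fin 0 → Fin N → ℝ := fun l => (Pi.single ((default : Fin 0 → Fin N) l) (1:ℝ) : Fin N → ℝ)
    set c : Fin N → ℝ := fun x => U ((0 : Fin 1).insertNth (Pi.single x (1:ℝ)) z) with hc
    set v : Fin N → ℝ := fun x => if 0 ≤ c x then 1 else -1 with hv
    have h1 := form_expand U 0 v z
    have h2 : ∑ x, v x * c x = ∑ x, |c x| := by
      refine Finset.sum_congr rfl fun x _ => ?_
      simp only [hv]
      split_ifs with h
      · rw [abs_of_nonneg h, one_mul]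
      · rw [abs_of_neg (not_le.1 h)]; ring
    have h3 := curry_norm U 0 v (by intro x; simp only [hv]; split_ifs <;> simp)
    have h4 := (U.curryMid 0 v).le_opNorm z
    simp only [Finset.univ_eq_empty, Finset.prod_empty, mul_one] at h4
    rw [h1] at h4
    change ∑ x, |c x| ≤ _
    rw [← h2]
    exact (le_abs_self _).trans (h4.trans h3)
  | succ k ih =>
    intro U
    set K : ℝ := ((k+1 : ℕ):ℝ) with hK
    have hK0 : 0 < K := by rw [hK]; positivity
    set p : ℝ := 2*K/(K+1) with hp
    have hp0 : 0 < p := by positivity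
    have hp2 : p < 2 := by rw [hp, div_lt_iff₀ (by positivity)]; linarith
    have hpk : 2 * ((k:ℝ)+1)/(k+2) = p := by rw [hp, hK]; push_cast; ring
    have hBU : 0 ≤ BC k * ‖U‖ := mul_nonneg (BC_pos k).le (norm_nonneg _)
    have main : ∀ j : Fin (k+2), ∑ y : Fin (k+1) → Fin N,
        (∑ x, |U (fun l => Pi.single ((j.insertNth x y : Fin (k+2) → Fin N) l) (1 : ℝ))| ^ 2)
          ^ (K/(K+1)) ≤ (5/3:ℝ)^(2-p) * (BC k * ‖U‖) ^ p := by
      intro j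
      set c : (Fin (k+1) → Fin N) → Fin N → ℝ := fun y x =>
        U (j.insertNth (Pi.single x (1:ℝ)) (fun l => (Pi.single (y l) (1:ℝ) : Fin N → ℝ))) with hc
      have hk : ∀ y, 2^N * (∑ x, c y x ^ 2) ^ (p/2) ≤ (5/3:ℝ)^(2-p) * ∑ ε, |SS (c y) ε| ^ p :=
        fun y => khinchine N (c y) p hp0 hp2
      have hV : ∀ ε : Fin N → Bool, ∑ y, |SS (c y) ε| ^ p ≤ (BC k * ‖U‖) ^ p := by
        intro ε
        have h := ih (U.curryMid j (fun x => sg (ε x)))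
        rw [hpk] at h
        have hn := curry_norm U j (fun x => sg (ε x)) (by
          intro x; simp only [sg]; split_ifs <;> simp)
        simp only [form_expand] at h
        refine h.trans (rpow_le_rpow (mul_nonneg (BC_pos k).le (norm_nonneg _)) ?_ hp0.le)
        exact mul_le_mul_of_nonneg_left hn (BC_pos k).le
      have h2N : (0:ℝ) < 2^N := by positivity
      refine le_of_mul_le_mul_left ?_ h2N
      have e : K/(K+1) = p/2 := by rw [hp]; ring
      simp only [single_insertNth, sq_abs, e]
      calc _ = ∑ y, 2^N * (∑ x, c y x ^ 2) ^ (p/2) := by rw [Finset.mul_sum]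
        _ ≤ ∑ y, (5/3:ℝ)^(2-p) * ∑ ε, |SS (c y) ε| ^ p := Finset.sum_le_sum fun y _ => hk y
        _ = (5/3:ℝ)^(2-p) * ∑ ε, ∑ y, |SS (c y) ε| ^ p := by
            rw [← Finset.mul_sum, Finset.sum_comm]
        _ ≤ (5/3:ℝ)^(2-p) * ∑ ε : Fin N → Bool, (BC k * ‖U‖) ^ p :=
            mul_le_mul_of_nonneg_left (Finset.sum_le_sum fun ε _ => hV ε) (by positivity)
        _ = _ := by simp; ring
    have hb := blei N (k+1) (by omega) (fun i => |U (fun l => Pi.single (i l) (1 : ℝ))|)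
      (fun i => abs_nonneg _) _ main
    refine hb.trans (le_of_eq ?_)
    rw [← hK]
    have hBC : BC (k+1) = (5/3:ℝ)^(1/K) * BC k := by
      unfold BC
      rw [Finset.sum_range_succ, rpow_add (by norm_num), mul_comm, hK]
      push_cast; rfl
    have e1 : (5/3:ℝ)^(2-p) = ((5/3:ℝ)^(1/K))^p := by
      rw [← rpow_mul (by norm_num)]; congr 1; rw [hp]; field_simp; ring
    rw [e1, ← mul_rpow (by positivity) hBU, ← mul_assoc, ← hBC,
      ← rpow_mul (mul_nonneg (BC_pos _).le (norm_nonneg _))]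
    congr 1
    rw [hp]; field_simp

lemma log53 : Real.log (5/3) ≤ 0.526 := by
  rw [Real.log_le_iff_le_exp (by norm_num)]
  have := Real.sum_le_exp_of_nonneg (x := 0.526) (by norm_num) 5
  refine le_trans ?_ this
  norm_num [Finset.sum_range_succ, Nat.factorial]

lemma BC_bound (m : ℕ) (hm : 16 ≤ m) : BC m < 1.338887 * (m:ℝ) ^ (0.526322:ℝ) := by
  induction m, hm using Nat.le_induction with
  | base =>
    have h1 : BC 16 ≤ (5/3:ℝ)^(3.4:ℝ) := by
      unfold BC
      refine rpow_le_rpow_of_exponent_le (by norm_num) ?_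
      norm_num [Finset.sum_range_succ]
    have h2 : (2:ℝ)^(2.1:ℝ) ≤ ((16:ℕ):ℝ) ^ (0.526322:ℝ) := by
      rw [show ((16:ℕ):ℝ) = (2:ℝ)^(4:ℝ) by norm_num, ← rpow_mul (by norm_num)]
      exact rpow_le_rpow_of_exponent_le (by norm_num) (by norm_num)
    have h3 : (5/3:ℝ)^(3.4:ℝ) < 1.338887 * (2:ℝ)^(2.1:ℝ) := by
      refine lt_of_pow_lt_pow_left₀ 20 (by positivity) ?_
      rw [mul_pow, ← rpow_natCast, ← rpow_mul (by norm_num), ← rpow_natCast ((2:ℝ)^(2.1:ℝ)),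
        ← rpow_mul (by norm_num), show (3.4:ℝ) * ((20:ℕ):ℝ) = ((68:ℕ):ℝ) by norm_num,
        show (2.1:ℝ) * ((20:ℕ):ℝ) = ((42:ℕ):ℝ) by norm_num, rpow_natCast, rpow_natCast]
      norm_num
    nlinarith
  | succ m hm ih =>
    have hm0 : (0:ℝ) < m := by exact_mod_cast (by omega : 0 < m)
    have hBC : BC (m+1) = BC m * (5/3:ℝ)^(1/((m:ℝ)+1)) := by
      unfold BC
      rw [Finset.sum_range_succ, rpow_add (by norm_num)]
    have hs : (5/3:ℝ)^(1/((m:ℝ)+1)) ≤ (((m:ℝ)+1)/m) ^ (0.526322:ℝ) := by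
      rw [← Real.log_le_log_iff (by positivity) (by positivity), Real.log_rpow (by norm_num),
        Real.log_rpow (by positivity)]
      have hl := Real.one_sub_inv_le_log_of_pos (x := ((m:ℝ)+1)/m) (by positivity)
      have e : 1 - (((m:ℝ)+1)/m)⁻¹ = 1/((m:ℝ)+1) := by field_simp; ring
      rw [e] at hl
      have h0 : 0 < 1/((m:ℝ)+1) := by positivity
      nlinarith [log53]
    rw [hBC]
    calc _ ≤ BC m * (((m:ℝ)+1)/m) ^ (0.526322:ℝ) := mul_le_mul_of_nonneg_left hs (BC_pos m).le
      _ < 1.338887 * (m:ℝ) ^ (0.526322:ℝ) * (((m:ℝ)+1)/m) ^ (0.526322:ℝ) :=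
          mul_lt_mul_of_pos_right ih (by positivity)
      _ = _ := by
          rw [mul_assoc, ← mul_rpow hm0.le (by positivity), mul_div_cancel₀ _ hm0.ne']
          push_cast; rfl

theorem stmt5 (n : ℕ) (hn : 16 < n) (N : ℕ) (hN : 0 < N)
    (U : ContinuousMultilinearMap ℝ (fun _ : Fin n => (Fin N → ℝ)) ℝ)
    (hU : 0 < ‖U‖) :
    BHreal n N U < 1.338887 * ((n : ℝ) - 1) ^ (0.526322 : ℝ) * ‖U‖ := by
  obtain ⟨m, rfl⟩ : ∃ m, n = m + 1 := ⟨n - 1, by omega⟩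
  have h := BH_main N m U
  have hb := BC_bound m (by omega)
  have hBU : 0 ≤ BC m * ‖U‖ := mul_nonneg (BC_pos m).le (norm_nonneg _)
  have h1 : BHreal (m+1) N U ≤ BC m * ‖U‖ := by
    unfold BHreal
    push_cast
    rw [show (m:ℝ) + 1 + 1 = m + 2 by ring]
    refine (rpow_le_rpow (Finset.sum_nonneg fun i _ => by positivity) h (by positivity)).trans ?_
    rw [← rpow_mul hBU]
    have : 2 * ((m:ℝ)+1)/(m+2) * (((m:ℝ)+2)/(2*(m+1))) = 1 := by field_simp
    rw [this, rpow_one]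
  refine h1.trans_lt ?_
  push_cast
  rw [add_sub_cancel_right]
  exact mul_lt_mul_of_pos_right hb hU
end
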